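/- Let α ∈ [0, 1/2) and let M = (M_y) be a quantum measurement that is α-gentle on all density matrices of ℂ^d. Then M is δ-quantum-differentially-private with δ = 2 log((1+2α)/(1−2α)): for all density matrices ρ₁, ρ₂ and all y, Tr[ρ₁ M_y*M_y] ≤ e^δ Tr[ρ₂ M_y*M_y]. -/

import Mathlib

open Matrix BigOperators ComplexOrder

lemma real_core {s t α : ℝ} (hs : 0 ≤ s) (ht : 0 ≤ t) (h0 : 0 ≤ α) (h1 : α < 1/2)
    (h : ∀ a b : ℝ, (1 - α^2) * ((a^2+b^2) * (a^2*s^2+b^2*t^2)) ≤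
      (a^2*s+b^2*t)^2 + a^2*b^2*(α*s+α*t)^2) :
    s * (1 - 2*α) ≤ t * (1+2*α) := by
  rcases ht.eq_or_lt with rfl | ht
  · have := h 1 4
    have h2 : α^2 < 1/4 := by nlinarith
    have : s^2 * (16 - 33 * α^2) ≤ 0 := by nlinarith
    have : s^2 ≤ 0 := by nlinarith [sq_nonneg s]
    have : s = 0 := by nlinarith
    simp [this]
  rcases hs.eq_or_lt with rfl | hs
  · simp; positivity
  have := h (√t) (√s)
  rw [Real.sq_sqrt ht.le, Real.sq_sqrt hs.le] at this
  have h3 : 0 < s * t := by positivity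
  have h4 : (s*t) * ((s-t)^2) ≤ (s*t) * (2 * α^2 * (s+t)^2) := by nlinarith
  have h5 := le_of_mul_le_mul_left h4 h3
  have h6 : (s-t)^2 ≤ (2*α*(s+t))^2 := by nlinarith [sq_nonneg (α*(s+t))]
  have := abs_le_of_sq_le_sq' h6 (by positivity)
  nlinarith [this.2]

lemma inner_core {V ι : Type*} [NormedAddCommGroup V] [InnerProductSpace ℂ V]
    (T : V →ₗ[ℂ] V) {α : ℝ} (h0 : 0 ≤ α) (h1 : α < 1/2)
    (G : ∀ x, (1-α^2) * (‖x‖^2 * ‖T x‖^2) ≤ ‖inner ℂ x (T x)‖^2)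
    (w : ι → V) (hw : Orthonormal ℂ w) {i j : ι} (hij : i ≠ j)
    (hT : inner ℂ (T (w i)) (T (w j)) = 0) :
    ‖T (w i)‖ * (1 - 2*α) ≤ ‖T (w j)‖ * (1+2*α) := by
  classical
  have key : ∀ k l : ι, k ≠ l → ‖inner ℂ (w k) (T (w k))‖ ≤ ‖T (w k)‖ ∧
      ‖inner ℂ (w l) (T (w k))‖ ≤ α * ‖T (w k)‖ := by
    intro k l hkl
    have hb := hw.sum_inner_products_le (s := {k, l}) (T (w k))
    rw [Finset.sum_pair hkl] at hb
    have hg := G (w k)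
    rw [hw.1 k] at hg
    constructor
    · refine (sq_le_sq₀ (norm_nonneg _) (by positivity)).1 ?_
      nlinarith [sq_nonneg ‖inner ℂ (w l) (T (w k))‖]
    · refine (sq_le_sq₀ (norm_nonneg _) (by positivity)).1 ?_
      nlinarith
  obtain ⟨hA, hC⟩ := key i j hij
  obtain ⟨hB, hD⟩ := key j i hij.symm
  have o1 : inner ℂ (w i) (w j) = 0 := hw.2 hij
  have o2 : inner ℂ (w j) (w i) = 0 := hw.2 hij.symm
  have hT' : inner ℂ (T (w j)) (T (w i)) = 0 := inner_eq_zero_symm.1 hT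
  apply real_core (norm_nonneg _) (norm_nonneg _) h0 h1
  intro a b
  have hn : ∀ (x y : V) (c e : ℝ), inner ℂ x y = 0 →
      ‖(c:ℂ) • x + (e:ℂ) • y‖^2 = c^2*‖x‖^2+e^2*‖y‖^2 := by
    intro x y c e hxy
    rw [pow_two, norm_add_sq_eq_norm_sq_add_norm_sq_of_inner_eq_zero (𝕜 := ℂ)]
    · simp [norm_smul]; ring_nf; simp; ring
    · simp [inner_smul_left, inner_smul_right, hxy]
  have e1 := G ((a:ℂ) • w i + (b:ℂ) • w j)
  have e2 := G ((a:ℂ) • w i + ((-b:ℝ):ℂ) • w j)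
  simp only [map_add, map_smul] at e1 e2
  rw [hn _ _ _ _ o1, hn _ _ _ _ hT, hw.1, hw.1] at e1 e2
  set A := inner ℂ (w i) (T (w i))
  set B := inner ℂ (w j) (T (w j))
  set C := inner ℂ (w j) (T (w i))
  set D := inner ℂ (w i) (T (w j))
  set X : ℂ := (a^2:ℝ) * A + (b^2:ℝ) * B with hX
  set Y : ℂ := (a*b:ℝ) * (C + D) with hY
  have f1 : inner ℂ ((a:ℂ) • w i + (b:ℂ) • w j) ((a:ℂ) • T (w i) + (b:ℂ) • T (w j)) = X + Y := by
    simp only [inner_add_left, inner_add_right, inner_smul_left, inner_smul_right, hX, hY, A, B, C, D,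
      Complex.conj_ofReal]
    push_cast; ring
  have f2 : inner ℂ ((a:ℂ) • w i + ((-b:ℝ):ℂ) • w j) ((a:ℂ) • T (w i) + ((-b:ℝ):ℂ) • T (w j)) = X - Y := by
    simp only [inner_add_left, inner_add_right, inner_smul_left, inner_smul_right, hX, hY, A, B, C, D,
      Complex.conj_ofReal]
    push_cast; ring
  rw [f1] at e1
  rw [f2] at e2
  have par := parallelogram_law_with_norm ℝ X Y
  have hXn : ‖X‖ ≤ a^2*‖T (w i)‖ + b^2*‖T (w j)‖ := by
    refine (norm_add_le _ _).trans ?_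
    rw [norm_mul, norm_mul, Complex.norm_of_nonneg (sq_nonneg a), Complex.norm_of_nonneg (sq_nonneg b)]
    gcongr
  have hYn : ‖Y‖ ≤ |a*b| * (α*‖T (w i)‖ + α*‖T (w j)‖) := by
    rw [hY, norm_mul, Complex.norm_real, Real.norm_eq_abs]
    gcongr
    exact (norm_add_le _ _).trans (by gcongr)
  have g1 := pow_le_pow_left₀ (norm_nonneg _) hXn 2
  have g2 := pow_le_pow_left₀ (norm_nonneg _) hYn 2
  rw [mul_pow, sq_abs] at g2
  nlinarith

lemma trace_sq {d : ℕ} {H : Matrix (Fin d) (Fin d) ℂ} (h : H.IsHermitian) (h0 : H.trace = 0)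
    {α : ℝ} (hα : (1 / 2 : ℝ) * ∑ i, |h.eigenvalues i| ≤ α) : (H * H).trace.re ≤ 2 * α^2 := by
  have e1 : (H * H).trace.re = ∑ i, h.eigenvalues i ^ 2 := by
    conv_lhs => rw [h.spectral_theorem, ← map_mul, Unitary.conjStarAlgAut_apply, Matrix.trace_mul_cycle]
    simp [Matrix.trace, Matrix.diagonal_mul_diagonal, pow_two]
  have e2 : ∑ i, h.eigenvalues i = 0 := by
    have := h.trace_eq_sum_eigenvalues
    rw [h0] at this
    have := congrArg Complex.re this
    simpa using this.symm
  rw [e1]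
  set l := h.eigenvalues
  have p1 : ∑ i, |l i| = ∑ i, (l i)⁺ + ∑ i, (l i)⁻ := by
    rw [← Finset.sum_add_distrib]; simp [posPart_add_negPart]
  have p2 : ∑ i, (l i)⁺ - ∑ i, (l i)⁻ = 0 := by
    rw [← Finset.sum_sub_distrib]; simpa [posPart_sub_negPart] using e2
  have p3 : ∑ i, l i ^ 2 = ∑ i, (l i)⁺^2 + ∑ i, (l i)⁻^2 := by
    rw [← Finset.sum_add_distrib]
    refine Finset.sum_congr rfl fun i _ => ?_
    rcases le_total 0 (l i) with hh | hh
    · simp [posPart_of_nonneg hh, negPart_of_nonneg hh]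
    · simp [posPart_of_nonpos hh, negPart_of_nonpos hh]
  have q1 := Finset.sum_sq_le_sq_sum_of_nonneg (s := Finset.univ) (f := fun i => (l i)⁺) (fun i _ => posPart_nonneg _)
  have q2 := Finset.sum_sq_le_sq_sum_of_nonneg (s := Finset.univ) (f := fun i => (l i)⁻) (fun i _ => negPart_nonneg _)
  have n1 : 0 ≤ ∑ i, (l i)⁺ := Finset.sum_nonneg (fun i _ => posPart_nonneg _)
  have n2 : ∑ i, (l i)⁺ ≤ α := by linarith
  have n3 : ∑ i, (l i)⁻ = ∑ i, (l i)⁺ := by linarith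
  rw [n3] at q2
  have := pow_le_pow_left₀ n1 n2 2
  linarith

/-- pure-state gentleness, normalized -/
lemma pure_unit {d : ℕ} (M : Matrix (Fin d) (Fin d) ℂ) {α : ℝ}
    (hg : ∀ ρ : Matrix (Fin d) (Fin d) ℂ, ρ.PosSemidef → ρ.trace = 1 →
      ∀ p : ℝ, p = (ρ * (Mᴴ * M)).trace.re → 0 < p →
      ∀ h : (ρ - ((1 : ℂ) / (p : ℂ)) • (M * ρ * Mᴴ)).IsHermitian,
        (1 / 2 : ℝ) * ∑ i, |h.eigenvalues i| ≤ α)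
    (x : Fin d → ℂ) (hx : x ⬝ᵥ star x = 1) (p : ℝ) (hp : 0 < p)
    (hMx : (M *ᵥ x) ⬝ᵥ star (M *ᵥ x) = p) :
    (1 - α^2) * p ≤ ‖(M *ᵥ x) ⬝ᵥ star x‖^2 := by
  have hpc : (p:ℂ) ≠ 0 := by exact_mod_cast hp.ne'
  have hM : M * vecMulVec x (star x) * Mᴴ = vecMulVec (M *ᵥ x) (star (M *ᵥ x)) := by
    rw [Matrix.mul_vecMulVec, Matrix.vecMulVec_mul, Matrix.star_mulVec]
  have htr : (M * vecMulVec x (star x) * Mᴴ).trace = p := by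
    rw [hM, Matrix.trace_vecMulVec, hMx]
  have hpr : p = (vecMulVec x (star x) * (Mᴴ * M)).trace.re := by
    rw [← Matrix.mul_assoc, Matrix.trace_mul_cycle, htr]; simp
  have hps : (vecMulVec x (star x)).PosSemidef := Matrix.posSemidef_vecMulVec_self_star x
  have hH : (vecMulVec x (star x) - ((1 : ℂ) / (p : ℂ)) • (M * vecMulVec x (star x) * Mᴴ)).IsHermitian := by
    apply hps.1.sub
    have := (hps.mul_mul_conjTranspose_same M).1
    unfold Matrix.IsHermitian at *
    rw [Matrix.conjTranspose_smul, this]; simp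
  have h1 := hg _ hps (by rw [Matrix.trace_vecMulVec, hx]) p hpr hp hH
  have h2 := trace_sq hH (by
    rw [Matrix.trace_sub, Matrix.trace_smul, htr, Matrix.trace_vecMulVec, hx]; simp [hpc]) h1
  set y := M *ᵥ x
  have hc : x ⬝ᵥ star y = star (y ⬝ᵥ star x) := by
    rw [dotProduct_comm x, Matrix.star_dotProduct, dotProduct_comm y]
  have h3 : ((vecMulVec x (star x) - ((1 : ℂ) / (p : ℂ)) • (M * vecMulVec x (star x) * Mᴴ)) *
     (vecMulVec x (star x) - ((1 : ℂ) / (p : ℂ)) • (M * vecMulVec x (star x) * Mᴴ))).trace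
      = ((2 - 2 * ‖y ⬝ᵥ star x‖^2 / p : ℝ) : ℂ) := by
    rw [hM]
    simp only [Matrix.sub_mul, Matrix.mul_sub, Matrix.trace_sub, Matrix.smul_mul, Matrix.mul_smul,
      Matrix.trace_smul, Matrix.vecMulVec_mul_vecMulVec, Matrix.trace_vecMulVec, smul_dotProduct, dotProduct_smul, Matrix.vecMulVec_smul]
    rw [dotProduct_comm (star x) x, dotProduct_comm (star y) y, dotProduct_comm (star x) y,
      dotProduct_comm (star y) x, hc, hx, hMx]
    have : star (y ⬝ᵥ star x) * (y ⬝ᵥ star x) = ((‖y ⬝ᵥ star x‖^2:ℝ):ℂ) := by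
      have := Complex.conj_mul' (y ⬝ᵥ star x)
      push_cast; exact this
    simp only [smul_eq_mul]
    rw [mul_comm (y ⬝ᵥ star x), this]
    push_cast
    field_simp
    ring
  rw [h3, Complex.ofReal_re] at h2
  have h4 : 1 - α^2 ≤ ‖y ⬝ᵥ star x‖^2 / p := by
    have : 2 * ‖y ⬝ᵥ star x‖^2 / p = 2 * (‖y ⬝ᵥ star x‖^2 / p) := by ring
    linarith
  rwa [le_div_iff₀ hp] at h4

lemma pure_all {d : ℕ} (M : Matrix (Fin d) (Fin d) ℂ) {α : ℝ}
    (hg : ∀ ρ : Matrix (Fin d) (Fin d) ℂ, ρ.PosSemidef → ρ.trace = 1 →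
      ∀ p : ℝ, p = (ρ * (Mᴴ * M)).trace.re → 0 < p →
      ∀ h : (ρ - ((1 : ℂ) / (p : ℂ)) • (M * ρ * Mᴴ)).IsHermitian,
        (1 / 2 : ℝ) * ∑ i, |h.eigenvalues i| ≤ α)
    (x : EuclideanSpace ℂ (Fin d)) :
    (1-α^2) * (‖x‖^2 * ‖Matrix.toLpLin 2 2 M x‖^2) ≤ ‖inner ℂ x (Matrix.toLpLin 2 2 M x)‖^2 := by
  set T := Matrix.toLpLin 2 2 M with hT
  have unit : ∀ z : EuclideanSpace ℂ (Fin d), ‖z‖ = 1 → T z ≠ 0 →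
      (1-α^2) * ‖T z‖^2 ≤ ‖inner ℂ z (T z)‖^2 := by
    intro z hz hTz
    have := pure_unit M hg z.ofLp (by
      rw [← EuclideanSpace.inner_eq_star_dotProduct, inner_self_eq_norm_sq_to_K, hz]; simp)
      (‖T z‖^2) (by have := norm_pos_iff.2 hTz; positivity) (by
      have := inner_self_eq_norm_sq_to_K (𝕜 := ℂ) (T z)
      rw [EuclideanSpace.inner_eq_star_dotProduct] at this
      simpa [hT, Matrix.toLpLin_apply] using this)
    rw [EuclideanSpace.inner_eq_star_dotProduct]
    simpa [hT, Matrix.toLpLin_apply] using this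
  by_cases hTx : T x = 0
  · simp [hTx]
  have hx : x ≠ 0 := by rintro rfl; simp at hTx
  have hn : 0 < ‖x‖ := norm_pos_iff.2 hx
  have hnc : ((‖x‖:ℝ):ℂ) ≠ 0 := by exact_mod_cast hn.ne'
  have := unit (((‖x‖:ℝ):ℂ)⁻¹ • x) (by rw [norm_smul]; simp [hn.ne']) (by
    rw [map_smul]; exact smul_ne_zero (inv_ne_zero hnc) hTx)
  rw [map_smul, inner_smul_left, inner_smul_right, norm_smul, norm_mul, norm_mul, RCLike.norm_conj, norm_inv,
    Complex.norm_real, norm_norm] at this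
  have h2 : ‖x‖^4 * ((1 - α ^ 2) * (‖x‖⁻¹ * ‖T x‖) ^ 2) ≤ ‖x‖^4 * (‖x‖⁻¹ * (‖x‖⁻¹ * ‖inner ℂ x (T x)‖)) ^ 2 :=
    mul_le_mul_of_nonneg_left this (by positivity)
  have e1 : ‖x‖^4 * ((1 - α ^ 2) * (‖x‖⁻¹ * ‖T x‖) ^ 2) = (1-α^2) * (‖x‖^2 * ‖T x‖^2) := by
    field_simp
  have e2 : ‖x‖^4 * (‖x‖⁻¹ * (‖x‖⁻¹ * ‖inner ℂ x (T x)‖)) ^ 2 = ‖inner ℂ x (T x)‖^2 := by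
    field_simp
  rwa [e1, e2] at h2

/-- For α ∈ [0, 1/2), an α-gentle measurement is
δ-quantum-differentially-private with δ = 2 log((1+2α)/(1−2α)). -/
theorem gentle_implies_qdp
    {d : ℕ} (hd : 0 < d) {Y : Type*} [Fintype Y]
    (M : Y → Matrix (Fin d) (Fin d) ℂ)
    (hcomplete : ∑ y, (M y)ᴴ * M y = 1)
    (α : ℝ) (hα0 : 0 ≤ α) (hα1 : α < 1 / 2)
    (hgentle : ∀ ρ : Matrix (Fin d) (Fin d) ℂ, ρ.PosSemidef → ρ.trace = 1 →
      ∀ y : Y, ∀ p : ℝ, p = (ρ * ((M y)ᴴ * M y)).trace.re → 0 < p →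
      ∀ h : (ρ - ((1 : ℂ) / (p : ℂ)) • (M y * ρ * (M y)ᴴ)).IsHermitian,
        (1 / 2 : ℝ) * ∑ i, |h.eigenvalues i| ≤ α) :
    ∀ y, ∀ ρ₁ ρ₂ : Matrix (Fin d) (Fin d) ℂ,
      ρ₁.PosSemidef → ρ₁.trace = 1 → ρ₂.PosSemidef → ρ₂.trace = 1 →
      (ρ₁ * ((M y)ᴴ * M y)).trace.re ≤
        Real.exp (2 * Real.log ((1 + 2 * α) / (1 - 2 * α))) *
          (ρ₂ * ((M y)ᴴ * M y)).trace.re := by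
  intro y ρ₁ ρ₂ hρ₁ ht₁ hρ₂ ht₂
  have hden : 0 < 1 - 2 * α := by linarith
  have hK : 0 < (1 + 2 * α) / (1 - 2 * α) := by positivity
  have hexp : Real.exp (2 * Real.log ((1 + 2 * α) / (1 - 2 * α))) = ((1 + 2 * α) / (1 - 2 * α))^2 := by
    rw [two_mul, Real.exp_add, Real.exp_log hK, pow_two]
  rw [hexp]
  set K := (1 + 2 * α) / (1 - 2 * α) with hKdef
  have hK1 : 1 ≤ K := by rw [hKdef, le_div_iff₀ hden]; linarith
  have G := pure_all (M y) (fun ρ h1 h2 => hgentle ρ h1 h2 y)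
  set N := M y
  have hE : (Nᴴ * N).IsHermitian := Matrix.isHermitian_conjTranspose_mul_self N
  set T := Matrix.toLpLin 2 2 N with hT
  set b := hE.eigenvectorBasis with hb
  set l := hE.eigenvalues with hl
  have hin : ∀ i j, inner ℂ (T (b i)) (T (b j)) = (l j : ℂ) * inner ℂ (b i) (b j) := by
    intro i j
    rw [EuclideanSpace.inner_eq_star_dotProduct, EuclideanSpace.inner_eq_star_dotProduct]
    simp only [hT, Matrix.toLpLin_apply]
    rw [Matrix.star_mulVec, dotProduct_comm, ← Matrix.dotProduct_mulVec, Matrix.mulVec_mulVec,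
      hE.mulVec_eigenvectorBasis, dotProduct_comm, smul_dotProduct, ← Complex.real_smul]
  have hnorm : ∀ i, ‖T (b i)‖^2 = l i := by
    intro i
    have h1 := hin i i
    rw [inner_self_eq_norm_sq_to_K, inner_self_eq_norm_sq_to_K, b.orthonormal.1 i] at h1
    have h2 : ((‖T (b i)‖^2 : ℝ) : ℂ) = (l i : ℂ) := by simpa using h1
    exact_mod_cast h2
  have hlam : ∀ i j, l i ≤ K^2 * l j := by
    intro i j
    rw [← hnorm i, ← hnorm j, ← mul_pow]
    refine pow_le_pow_left₀ (norm_nonneg _) ?_ 2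
    by_cases hij : i = j
    · subst hij
      nlinarith [norm_nonneg (T (b i))]
    · have := inner_core T hα0 hα1 G b b.orthonormal hij (by rw [hin, b.orthonormal.2 hij, mul_zero])
      rw [hKdef, div_mul_eq_mul_div, le_div_iff₀ hden]
      linarith
  have htrace : ∀ ρ : Matrix (Fin d) (Fin d) ℂ, ρ.PosSemidef → ρ.trace = 1 →
      ∃ w : Fin d → ℝ, (∀ i, 0 ≤ w i) ∧ ∑ i, w i = 1 ∧ (ρ * (Nᴴ * N)).trace.re = ∑ i, w i * l i := by
    intro ρ hρ h1
    set U : Matrix (Fin d) (Fin d) ℂ := (hE.eigenvectorUnitary : Matrix (Fin d) (Fin d) ℂ) with hU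
    have hUU : U * Uᴴ = 1 := Unitary.coe_mul_star_self hE.eigenvectorUnitary
    have hsp : Nᴴ * N = U * diagonal (fun i => (l i : ℂ)) * Uᴴ := by
      conv_lhs => rw [hE.spectral_theorem, Unitary.conjStarAlgAut_apply]
      rfl
    have hps := hρ.conjTranspose_mul_mul_same U
    refine ⟨fun i => ((Uᴴ * ρ * U) i i).re, fun i => (Complex.le_def.1 (hps.diag_nonneg (i := i))).1, ?_, ?_⟩
    · have : (Uᴴ * ρ * U).trace = 1 := by
        rw [Matrix.trace_mul_cycle, hUU, Matrix.one_mul, h1]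
      have := congrArg Complex.re this
      simpa [Matrix.trace] using this
    · have : (ρ * (Nᴴ * N)).trace = (Uᴴ * ρ * U * diagonal (fun i => (l i : ℂ))).trace := by
        rw [hsp, ← Matrix.mul_assoc, Matrix.trace_mul_comm]
        simp only [Matrix.mul_assoc]
      rw [this]
      simp [Matrix.trace, Matrix.mul_diagonal]
  obtain ⟨w₁, p₁, s₁, e₁⟩ := htrace ρ₁ hρ₁ ht₁
  obtain ⟨w₂, p₂, s₂, e₂⟩ := htrace ρ₂ hρ₂ ht₂
  rw [e₁, e₂]
  calc ∑ i, w₁ i * l i = ∑ i, ∑ j, w₁ i * w₂ j * l i := by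
        refine Finset.sum_congr rfl fun i _ => ?_
        rw [← Finset.sum_mul, ← Finset.mul_sum, s₂, mul_one]
    _ ≤ ∑ i, ∑ j, w₁ i * w₂ j * (K^2 * l j) := by
        refine Finset.sum_le_sum fun i _ => Finset.sum_le_sum fun j _ => ?_
        exact mul_le_mul_of_nonneg_left (hlam i j) (mul_nonneg (p₁ i) (p₂ j))
    _ = (∑ i, w₁ i) * (K^2 * ∑ j, w₂ j * l j) := by
        rw [Finset.sum_mul]
        refine Finset.sum_congr rfl fun i _ => ?_
        rw [Finset.mul_sum, Finset.mul_sum]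
        refine Finset.sum_congr rfl fun j _ => ?_
        ring
    _ = K^2 * ∑ j, w₂ j * l j := by rw [s₁, one_mul]
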